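/- arXiv:2112.03180 — 2 statements merged into one kernel-verified Lean document; each statement's English description precedes it below -/
import Mathlib

section
/- Let a < b and let (N_j)_{j≥0} be a sequence of positive reals which is log-convex (N_j^2 ≤ N_{j-1} N_{j+1} for all j ≥ 1). Then there exists f ∈ C^∞([a,b]) such that max_{x∈[a,b]} |f^{(n)}(x)| ≤ 2^{n+2} N_n for all n ≥ 0 (in particular f belongs to the Denjoy–Carleman class C^N([a,b])) and |f^{(j)}((a+b)/2)| ≥ N_j for every j ≥ 0. -/
open Set

/-!
The ratios `μ k = N (k + 1) / N k` of a log-convex sequence increase, so `N` lies above each of its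
geometric tangents: `N k * μ k ^ (j - k) ≤ N j`. Enlarging the frequencies to `l k = q * μ k` with
`q > 1` and normalizing `c k * l k ^ k = N k` therefore gives
`c k * l k ^ n ≤ q ^ n * N n * q⁻¹ ^ k`, which sums over `k` to a constant times `q ^ n * N n`,
while the term `k = n` alone is `N n`. These sums are up to sign the derivatives at `m` of
`∑ c k * φ (l k * (x - m))`, where `φ = cos + sin` has bounded derivatives, all of which are `±1`
at the origin.
-/

section LogConvex

variable {𝕜 : Type*} [Field 𝕜] [LinearOrder 𝕜] [IsStrictOrderedRing 𝕜] {N : ℕ → 𝕜}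

theorem monotone_ratio_of_log_convex (hpos : ∀ j, 0 < N j)
    (hconv : ∀ j, N (j + 1) ^ 2 ≤ N j * N (j + 2)) :
    Monotone fun j => N (j + 1) / N j := by
  refine monotone_nat_of_le_succ fun j => ?_
  rw [div_le_div_iff₀ (hpos _) (hpos _), ← sq, mul_comm]
  exact hconv j

theorem div_ratio_pow_le_of_monotone_ratio (hpos : ∀ j, 0 < N j)
    (hmono : Monotone fun j => N (j + 1) / N j) (k j : ℕ) :
    N k / (N (k + 1) / N k) ^ k ≤ N j / (N (k + 1) / N k) ^ j := by
  set r := N (k + 1) / N k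
  have hr : 0 < r := div_pos (hpos _) (hpos _)
  have hsucc (i : ℕ) : N (i + 1) / r ^ (i + 1) = N i / r ^ i * (N (i + 1) / N i / r) := by
    have := (hpos i).ne'
    rw [pow_succ]
    field_simp
  have hterm (i : ℕ) : 0 ≤ N i / r ^ i := (div_pos (hpos i) (pow_pos hr i)).le
  rcases le_total k j with hkj | hjk
  · refine monotoneOn_nat_Ici_of_le_succ (f := fun i => N i / r ^ i) (fun i hi => ?_)
      self_mem_Ici hkj hkj
    rw [hsucc]
    exact le_mul_of_one_le_right (hterm i) ((one_le_div hr).2 (hmono hi))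
  · refine antitoneOn_of_add_one_le (f := fun i => N i / r ^ i) ordConnected_Iic
      (fun i _ hi _ => ?_) hjk self_mem_Iic hjk
    rw [hsucc]
    exact mul_le_of_le_one_right (hterm i) ((div_le_one hr).2 (hmono hi))

/-- The ratio of consecutive terms of `N` at `k`, which is the ratio of the geometric tangent to `N`
at `k`, enlarged by the factor `q`. It is the `k`-th frequency of the extremal series. -/
def tangentFreq (q : 𝕜) (N : ℕ → 𝕜) (k : ℕ) : 𝕜 := q * (N (k + 1) / N k)

/-- The coefficient of the frequency `tangentFreq q N k` in the extremal series, normalized so that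
its contribution to the `k`-th derivative is `N k`. -/
def tangentCoeff (q : 𝕜) (N : ℕ → 𝕜) (k : ℕ) : 𝕜 := N k / tangentFreq q N k ^ k

variable {q : 𝕜}

theorem tangentFreq_pos (hq : 0 < q) (hpos : ∀ j, 0 < N j) (k : ℕ) : 0 < tangentFreq q N k :=
  mul_pos hq (div_pos (hpos _) (hpos _))

theorem tangentCoeff_mul_pow_pos (hq : 0 < q) (hpos : ∀ j, 0 < N j) (n k : ℕ) :
    0 < tangentCoeff q N k * tangentFreq q N k ^ n :=
  have hfreq := tangentFreq_pos hq hpos k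
  mul_pos (div_pos (hpos k) (pow_pos hfreq k)) (pow_pos hfreq n)

theorem tangentCoeff_mul_pow_self (hq : 0 < q) (hpos : ∀ j, 0 < N j) (k : ℕ) :
    tangentCoeff q N k * tangentFreq q N k ^ k = N k :=
  div_mul_cancel₀ _ (pow_pos (tangentFreq_pos hq hpos k) k).ne'

theorem tangentCoeff_mul_pow_le (hq : 0 < q) (hpos : ∀ j, 0 < N j)
    (hmono : Monotone fun j => N (j + 1) / N j) (n k : ℕ) :
    tangentCoeff q N k * tangentFreq q N k ^ n ≤ q ^ n * N n * q⁻¹ ^ k := by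
  have htangent := div_ratio_pow_le_of_monotone_ratio hpos hmono k n
  have hr : 0 < N (k + 1) / N k := div_pos (hpos _) (hpos _)
  unfold tangentCoeff tangentFreq
  set r := N (k + 1) / N k
  calc N k / (q * r) ^ k * (q * r) ^ n = N k / r ^ k * (r ^ n * q ^ n * q⁻¹ ^ k) := by
        rw [mul_pow, mul_pow, inv_pow]; field_simp
    _ ≤ N n / r ^ n * (r ^ n * q ^ n * q⁻¹ ^ k) := by gcongr
    _ = q ^ n * N n * q⁻¹ ^ k := by field_simp

end LogConvex

section Moments

variable {N : ℕ → ℝ} {q : ℝ}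

theorem hasSum_mul_inv_geometric (hq : 1 < q) (C : ℝ) :
    HasSum (fun k : ℕ => C * q⁻¹ ^ k) (C * (1 - q⁻¹)⁻¹) :=
  (hasSum_geometric_of_lt_one (by positivity) (inv_lt_one_of_one_lt₀ hq)).mul_left C

theorem summable_tangentCoeff_mul_pow (hq : 1 < q) (hpos : ∀ j, 0 < N j)
    (hmono : Monotone fun j => N (j + 1) / N j) (n : ℕ) :
    Summable fun k => tangentCoeff q N k * tangentFreq q N k ^ n :=
  have hq₀ := zero_lt_one.trans hq
  (hasSum_mul_inv_geometric hq _).summable.of_nonneg_of_le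
    (fun k => (tangentCoeff_mul_pow_pos hq₀ hpos n k).le) (tangentCoeff_mul_pow_le hq₀ hpos hmono n)

theorem tsum_tangentCoeff_mul_pow_le (hq : 1 < q) (hpos : ∀ j, 0 < N j)
    (hmono : Monotone fun j => N (j + 1) / N j) (n : ℕ) :
    ∑' k, tangentCoeff q N k * tangentFreq q N k ^ n ≤ q ^ n * N n * (1 - q⁻¹)⁻¹ :=
  hasSum_le (tangentCoeff_mul_pow_le (zero_lt_one.trans hq) hpos hmono n)
    (summable_tangentCoeff_mul_pow hq hpos hmono n).hasSum (hasSum_mul_inv_geometric hq _)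

theorem le_tsum_tangentCoeff_mul_pow (hq : 1 < q) (hpos : ∀ j, 0 < N j)
    (hmono : Monotone fun j => N (j + 1) / N j) (n : ℕ) :
    N n ≤ ∑' k, tangentCoeff q N k * tangentFreq q N k ^ n := by
  have hq₀ := zero_lt_one.trans hq
  calc N n = tangentCoeff q N n * tangentFreq q N n ^ n :=
        (tangentCoeff_mul_pow_self hq₀ hpos n).symm
    _ ≤ _ := (summable_tangentCoeff_mul_pow hq hpos hmono n).le_tsum n
        fun k _ => (tangentCoeff_mul_pow_pos hq₀ hpos n k).le

end Moments

section DilationSeries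

variable {ι E : Type*} [NormedAddCommGroup E] [NormedSpace ℝ E]

/-- The series of dilates `∑ c i • φ (l i * x)` of one profile `φ`. With `φ = cos + sin` it is the
extremal function; a general `φ` makes the class of such series closed under differentiation. -/
noncomputable def dilationSeries (c l : ι → ℝ) (φ : ℝ → E) (x : ℝ) : E :=
  ∑' i, c i • φ (l i * x)

variable {c l : ι → ℝ} {φ : ℝ → E} {B : ℕ → ℝ}

theorem dilationSeries_zero (hc : Summable c) :
    dilationSeries c l φ 0 = (∑' i, c i) • φ 0 := by
  simp only [dilationSeries, mul_zero]
  exact hc.tsum_smul_const _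

theorem norm_dilationSeries_le {C : ℝ} (hc : Summable c) (hφ : ∀ x, ‖φ x‖ ≤ C) (x : ℝ) :
    ‖dilationSeries c l φ x‖ ≤ (∑' i, |c i|) * C := by
  refine tsum_of_norm_bounded (hc.abs.hasSum.mul_right C) fun i => ?_
  rw [norm_smul, Real.norm_eq_abs]
  gcongr
  exact hφ _

theorem iteratedDeriv_smul_comp_mul (hφ : ContDiff ℝ (⊤ : ℕ∞) φ) (c l : ℝ) (n : ℕ) (x : ℝ) :
    iteratedDeriv n (fun x => c • φ (l * x)) x = (c * l ^ n) • iteratedDeriv n φ (l * x) := by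
  have hφn : ContDiff ℝ n φ := hφ.of_le (mod_cast le_top)
  rw [iteratedDeriv_fun_const_smul_field, iteratedDeriv_comp_const_smul hφn, mul_smul]

theorem norm_iteratedFDeriv_smul_comp_mul_le (hφ : ContDiff ℝ (⊤ : ℕ∞) φ)
    (hB : ∀ n x, ‖iteratedDeriv n φ x‖ ≤ B n) (c l : ℝ) (n : ℕ) (x : ℝ) :
    ‖iteratedFDeriv ℝ n (fun x => c • φ (l * x)) x‖ ≤ |c * l ^ n| * B n := by
  rw [norm_iteratedFDeriv_eq_norm_iteratedDeriv, iteratedDeriv_smul_comp_mul hφ, norm_smul,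
    Real.norm_eq_abs]
  gcongr
  exact hB n _

theorem contDiff_smul_comp_mul (hφ : ContDiff ℝ (⊤ : ℕ∞) φ) (c l : ℝ) :
    ContDiff ℝ (⊤ : ℕ∞) fun x => c • φ (l * x) := by
  fun_prop

variable [CompleteSpace E]

theorem contDiff_dilationSeries (hφ : ContDiff ℝ (⊤ : ℕ∞) φ)
    (hB : ∀ n x, ‖iteratedDeriv n φ x‖ ≤ B n) (hc : ∀ n : ℕ, Summable fun i => c i * l i ^ n) :
    ContDiff ℝ (⊤ : ℕ∞) (dilationSeries c l φ) :=
  contDiff_tsum (fun i => contDiff_smul_comp_mul hφ (c i) (l i))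
    (fun n _ => (hc n).abs.mul_right (B n))
    fun n i x _ => norm_iteratedFDeriv_smul_comp_mul_le hφ hB (c i) (l i) n x

theorem iteratedDeriv_dilationSeries (hφ : ContDiff ℝ (⊤ : ℕ∞) φ)
    (hB : ∀ n x, ‖iteratedDeriv n φ x‖ ≤ B n) (hc : ∀ n : ℕ, Summable fun i => c i * l i ^ n)
    (n : ℕ) :
    iteratedDeriv n (dilationSeries c l φ) =
      dilationSeries (fun i => c i * l i ^ n) l (iteratedDeriv n φ) := by
  let term (i : ι) (x : ℝ) : E := c i • φ (l i * x)
  have hbound (n : ℕ) (i : ι) (x : ℝ) : ‖iteratedFDeriv ℝ n (term i) x‖ ≤ |c i * l i ^ n| * B n :=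
    norm_iteratedFDeriv_smul_comp_mul_le hφ hB (c i) (l i) n x
  have hsum (n : ℕ) : Summable fun i => |c i * l i ^ n| * B n := (hc n).abs.mul_right (B n)
  funext x
  have htermwise : iteratedFDeriv ℝ n (dilationSeries c l φ) x =
      ∑' i, iteratedFDeriv ℝ n (term i) x :=
    iteratedFDeriv_tsum_apply (N := ⊤) (fun i => contDiff_smul_comp_mul hφ (c i) (l i))
      (fun n _ => hsum n) (fun n i x _ => hbound n i x) le_top x
  have hsummable : Summable fun i => iteratedFDeriv ℝ n (term i) x :=
    .of_norm_bounded (hsum n) fun i => hbound n i x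
  calc iteratedDeriv n (dilationSeries c l φ) x
      = ∑' i, iteratedDeriv n (term i) x := by
        simp only [iteratedDeriv_eq_iteratedFDeriv]
        rw [htermwise, ContinuousMultilinearMap.tsum_eval hsummable]
    _ = ∑' i, (c i * l i ^ n) • iteratedDeriv n φ (l i * x) :=
        tsum_congr fun i => iteratedDeriv_smul_comp_mul hφ (c i) (l i) n x

end DilationSeries

section CosAddSin

theorem iteratedDeriv_cos_add_sin (n : ℕ) (x : ℝ) :
    iteratedDeriv n (Real.cos + Real.sin) x =
      iteratedDeriv n Real.cos x + iteratedDeriv n Real.sin x :=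
  iteratedDeriv_add Real.contDiff_cos.contDiffAt Real.contDiff_sin.contDiffAt

theorem abs_iteratedDeriv_cos_add_sin_le_two (n : ℕ) (x : ℝ) :
    |iteratedDeriv n (Real.cos + Real.sin) x| ≤ 2 := by
  rw [iteratedDeriv_cos_add_sin, ← one_add_one_eq_two]
  exact (abs_add_le _ _).trans
    (add_le_add (Real.abs_iteratedDeriv_cos_le_one n x) (Real.abs_iteratedDeriv_sin_le_one n x))

theorem abs_iteratedDeriv_cos_add_sin_zero (n : ℕ) :
    |iteratedDeriv n (Real.cos + Real.sin) 0| = 1 := by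
  rw [iteratedDeriv_cos_add_sin]
  obtain ⟨k, rfl | rfl⟩ := n.even_or_odd' <;> simp

end CosAddSin

theorem exists_function_attaining_bounds_general {N : ℕ → ℝ} (hpos : ∀ j, 0 < N j)
    (hconv : ∀ j, N (j + 1) ^ 2 ≤ N j * N (j + 2)) {q : ℝ} (hq : 1 < q) (m : ℝ) :
    ∃ f : ℝ → ℝ, ContDiff ℝ (⊤ : ℕ∞) f ∧
      (∀ n x, |iteratedDeriv n f x| ≤ 2 * (1 - q⁻¹)⁻¹ * q ^ n * N n) ∧
      ∀ n, N n ≤ |iteratedDeriv n f m| := by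
  have hmono := monotone_ratio_of_log_convex hpos hconv
  have hsum := summable_tangentCoeff_mul_pow hq hpos hmono
  have habs (n k : ℕ) := abs_of_pos (tangentCoeff_mul_pow_pos (zero_lt_one.trans hq) hpos n k)
  have hφ : ContDiff ℝ (⊤ : ℕ∞) (Real.cos + Real.sin) := Real.contDiff_cos.add Real.contDiff_sin
  have hB := abs_iteratedDeriv_cos_add_sin_le_two
  let F := dilationSeries (tangentCoeff q N) (tangentFreq q N) (Real.cos + Real.sin)
  have hderiv (n : ℕ) (x : ℝ) : iteratedDeriv n (fun x => F (x - m)) x =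
      dilationSeries (fun k => tangentCoeff q N k * tangentFreq q N k ^ n) (tangentFreq q N)
        (iteratedDeriv n (Real.cos + Real.sin)) (x - m) := by
    rw [iteratedDeriv_comp_sub_const, iteratedDeriv_dilationSeries hφ hB hsum]
  refine ⟨fun x => F (x - m), (contDiff_dilationSeries hφ hB hsum).comp (by fun_prop),
    fun n x => ?_, fun n => ?_⟩
  · rw [hderiv, ← Real.norm_eq_abs]
    calc _ ≤ (∑' k, |tangentCoeff q N k * tangentFreq q N k ^ n|) * 2 :=
          norm_dilationSeries_le (hsum n) (hB n) (x - m)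
      _ ≤ q ^ n * N n * (1 - q⁻¹)⁻¹ * 2 := by
          simp only [habs]
          gcongr
          exact tsum_tangentCoeff_mul_pow_le hq hpos hmono n
      _ = 2 * (1 - q⁻¹)⁻¹ * q ^ n * N n := by ring
  · rw [hderiv, sub_self, dilationSeries_zero (hsum n), smul_eq_mul, abs_mul,
      abs_iteratedDeriv_cos_add_sin_zero, mul_one]
    exact (le_tsum_tangentCoeff_mul_pow hq hpos hmono n).trans (le_abs_self _)

/-- **Lemma 2.** For every log-convex positive sequence `N` there is a function
`f ∈ C^N([a,b])` (with constant `2^(n+2)`) whose derivatives at the midpoint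
attain the bounds `N j`. -/
theorem exists_function_attaining_bounds
    (a b : ℝ) (hab : a < b)
    (N : ℕ → ℝ) (hNpos : ∀ j, 0 < N j)
    (hlogconv : ∀ j : ℕ, 1 ≤ j → (N j) ^ 2 ≤ N (j - 1) * N (j + 1)) :
    ∃ f : ℝ → ℝ, ContDiffOn ℝ (⊤ : ℕ∞) f (Icc a b) ∧
      (∀ n : ℕ, ∀ x ∈ Icc a b,
        |iteratedDerivWithin n f (Icc a b) x| ≤ 2 ^ (n + 2) * N n) ∧
      (∀ j : ℕ, N j ≤ |iteratedDerivWithin j f (Icc a b) ((a + b) / 2)|) := by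
  obtain ⟨f, hf, hbound, hmid⟩ := exists_function_attaining_bounds_general hNpos
    (fun j => hlogconv (j + 1) j.succ_pos) one_lt_two ((a + b) / 2)
  have hwithin (n : ℕ) {x : ℝ} (hx : x ∈ Icc a b) :
      iteratedDerivWithin n f (Icc a b) x = iteratedDeriv n f x :=
    iteratedDerivWithin_eq_iteratedDeriv (uniqueDiffOn_Icc hab)
      (hf.of_le (mod_cast le_top)).contDiffAt hx
  refine ⟨f, hf.contDiffOn, fun n x hx => ?_, fun j => ?_⟩
  · rw [hwithin n hx]
    exact (hbound n x).trans_eq (by ring)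
  · rw [hwithin j ⟨by linarith, by linarith⟩]
    exact hmid j
end

section
/- Let a < b, let s ≥ 1, and let f : [a,b] → ℝ be C^∞. Suppose there exist a constant c_0 > 0 and a strictly increasing sequence of positive integers (d_n)_{n≥0} tending to infinity with d_{n+1}/d_n ≤ c_0 for all n, such that max_{x∈[a,b]} |f^{(d_n)}(x)| ≤ d_n^{s·d_n} for every n. Then f belongs to the Gevrey class G^s([a,b]); that is, there exists K > 0 such that max_{x∈[a,b]} |f^{(n)}(x)| ≤ K^{n+1} · n^{ns} for all n ≥ 1. -/
open Set Filter

/-!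
Fix an order `N` between two consecutive orders `p = d i ≤ N < q = d (i + 1)` and a point `x`. On a
segment of length `η` with endpoint `x`, the Taylor polynomial of `f^(p)` at `x` of degree
`q - p - 1` is bounded by `sup |f^(p)| + sup |f^(q)| η^(q-p) / (q-p)!`. Among the polynomials of a
given degree bounded by `1` on a segment, the Chebyshev polynomial has the largest derivatives at an
endpoint, so every coefficient of the Taylor polynomial, in particular the one carrying `f^(N)(x)`,
is bounded by this quantity up to a factor `(N-p)! 8^(q-p) η^(-(N-p))`; for vector-valued `f` this
is applied to `L ∘ f` with `L` a norming functional.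

The choice `η = (b - a) / 2 * N^(1-s)` bounds both terms by `N^(N s)` up to a factor
exponential in `q`, hence in `N` because `q ≤ c₀ p ≤ c₀ N`. Since `s ≥ 1`, `η` is at most half the
length of `[a, b]`, so that a segment of length `η` with endpoint `x` fits into `[a, b]`.
-/

section Polynomial

open Polynomial
open scoped Nat

theorem chebyshevT_eval_le_pow {x : ℝ} (hx : 1 ≤ x) (n : ℕ) :
    (Chebyshev.T ℝ n).eval x ≤ (2 * x) ^ n := by
  induction n with
  | zero => simp
  | succ n ih =>
    have h_nonneg : 0 ≤ (Chebyshev.T ℝ (n - 1)).eval x :=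
      zero_le_one.trans (Chebyshev.one_le_eval_T_real _ hx)
    calc (Chebyshev.T ℝ (n + 1 : ℕ)).eval x
        = 2 * x * (Chebyshev.T ℝ n).eval x - (Chebyshev.T ℝ (n - 1)).eval x := by
          simp [Chebyshev.T_add_one]
      _ ≤ 2 * x * (2 * x) ^ n := by nlinarith
      _ = (2 * x) ^ (n + 1) := (pow_succ' _ _).symm

theorem factorial_mul_taylor_coeff {R : Type*} [CommSemiring R] (P : R[X]) (r : R) (k : ℕ) :
    k ! * (taylor r P).coeff k = (derivative^[k] P).eval r := by
  rw [taylor_coeff, ← factorial_smul_hasseDeriv]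
  simp

theorem eval_iterate_derivative_le_factorial_mul_eval_add_one {P : ℝ[X]} {r : ℝ}
    (hP : ∀ j, 0 ≤ (derivative^[j] P).eval r) (k : ℕ) :
    (derivative^[k] P).eval r ≤ k ! * P.eval (r + 1) := by
  have h_nonneg (j : ℕ) : 0 ≤ (taylor r P).coeff j :=
    nonneg_of_mul_nonneg_right ((hP j).trans_eq (factorial_mul_taylor_coeff P r j).symm)
      (by positivity)
  have h_eval :
      P.eval (r + 1) = ∑ j ∈ Finset.range (P.natDegree + k + 1), (taylor r P).coeff j := by
    rw [add_comm r, ← taylor_eval, eval_eq_sum_range' (n := P.natDegree + k + 1)]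
    · simp
    · rw [natDegree_taylor]; omega
  rw [← factorial_mul_taylor_coeff, h_eval]
  gcongr
  exact Finset.single_le_sum (f := (taylor r P).coeff) (fun j _ ↦ h_nonneg j) (by simp)

theorem eval_one_iterate_derivative_chebyshevT_le (n k : ℕ) :
    (derivative^[k] (Chebyshev.T ℝ n)).eval 1 ≤ k ! * 4 ^ n := by
  have h_nonneg (j : ℕ) : 0 ≤ (derivative^[j] (Chebyshev.T ℝ n)).eval 1 :=
    (abs_nonneg _).trans (Chebyshev.abs_iterate_derivative_T_real_le n j abs_one.le)
  calc (derivative^[k] (Chebyshev.T ℝ n)).eval 1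
      ≤ k ! * (Chebyshev.T ℝ n).eval (1 + 1) :=
        eval_iterate_derivative_le_factorial_mul_eval_add_one h_nonneg k
    _ ≤ k ! * (2 * (1 + 1)) ^ n := by gcongr; exact chebyshevT_eval_le_pow (by norm_num) n
    _ = k ! * 4 ^ n := by norm_num

theorem abs_eval_iterate_derivative_le_mul_chebyshevT {n : ℕ} {P : ℝ[X]} {M x : ℝ}
    (hdeg : P.degree ≤ n) (hP : ∀ t ∈ Icc (-1 : ℝ) 1, |P.eval t| ≤ M) (hx : 1 ≤ x) (k : ℕ) :
    |(derivative^[k] P).eval x| ≤ M * (derivative^[k] (Chebyshev.T ℝ n)).eval x := by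
  have hM : 0 ≤ M := (abs_nonneg _).trans (hP 1 (by simp))
  rcases hM.eq_or_lt with rfl | hM
  · have hP_zero : P = 0 := eq_zero_of_infinite_isRoot P <|
      (Icc_infinite (by norm_num : (-1 : ℝ) < 1)).mono fun t ht ↦ abs_nonpos_iff.1 (hP t ht)
    simp [hP_zero]
  have h_scaled {c : ℝ} (hc : |c| = M⁻¹) :
      c * (derivative^[k] P).eval x ≤ (derivative^[k] (Chebyshev.T ℝ n)).eval x := by
    have h := Chebyshev.eval_iterate_derivative_le_of_forall_abs_le_one (P := c • P) (k := k)
      hx ((degree_smul_le c P).trans hdeg) fun t ht ↦ by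
        rw [eval_smul, smul_eq_mul, abs_mul, hc, inv_mul_le_one₀ hM]
        exact hP t ht
    simpa only [iterate_derivative_smul, eval_smul, smul_eq_mul] using h
  have h_abs : |M⁻¹ * (derivative^[k] P).eval x| ≤ (derivative^[k] (Chebyshev.T ℝ n)).eval x := by
    refine abs_le'.2 ⟨h_scaled (abs_of_pos (inv_pos.2 hM)), ?_⟩
    rw [← neg_mul]
    exact h_scaled (by rw [abs_neg, abs_of_pos (inv_pos.2 hM)])
  rwa [abs_mul, abs_of_pos (inv_pos.2 hM), inv_mul_le_iff₀ hM] at h_abs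

theorem abs_coeff_le_of_forall_abs_sum_le {n k : ℕ} {c : ℕ → ℝ} {M : ℝ} (hk : k ≤ n)
    (hc : ∀ u ∈ Icc (0 : ℝ) 1, |∑ j ∈ Finset.range (n + 1), c j * u ^ j| ≤ M) :
    |c k| ≤ M * 8 ^ n := by
  have hM : 0 ≤ M := (abs_nonneg _).trans (hc 0 (by simp))
  -- The substitution `u = (1 - t) / 2` moves the expansion point `u = 0` to the endpoint `t = 1`.
  set S : ℝ[X] := ∑ j ∈ Finset.range (n + 1), monomial j (c j * (-1 / 2) ^ j) with hS
  have hS_degree : (taylor (-1) S).degree ≤ n := by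
    rw [degree_taylor]
    refine (degree_sum_le _ _).trans (Finset.sup_le fun j hj ↦ (degree_monomial_le _ _).trans ?_)
    exact_mod_cast Finset.mem_range_succ_iff.1 hj
  have hS_coeff : S.coeff k = c k * (-1 / 2) ^ k := by
    simp [hS, finsetSum_coeff, coeff_monomial, Nat.lt_succ_of_le hk]
  have hS_bound : ∀ t ∈ Icc (-1 : ℝ) 1, |(taylor (-1) S).eval t| ≤ M := by
    intro t ht
    convert hc ((1 - t) / 2) ⟨by linarith [ht.2], by linarith [ht.1]⟩ using 2
    rw [taylor_eval, hS, eval_finsetSum]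
    refine Finset.sum_congr rfl fun j _ ↦ ?_
    rw [eval_monomial, mul_assoc, ← mul_pow]
    ring
  have h_half : |c k| * (1 / 2) ^ k ≤ M * 4 ^ n := by
    have h := (abs_eval_iterate_derivative_le_mul_chebyshevT hS_degree hS_bound le_rfl k).trans
      (mul_le_mul_of_nonneg_left (eval_one_iterate_derivative_chebyshevT_le n k) hM)
    rw [← factorial_mul_taylor_coeff, taylor_taylor, add_neg_cancel, taylor_zero, hS_coeff,
      abs_mul, Nat.abs_cast, mul_left_comm, mul_le_mul_iff_right₀ (by positivity)] at h
    simpa [abs_mul, abs_div] using h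
  calc |c k| = |c k| * (1 / 2) ^ k * 2 ^ k := by rw [mul_assoc, ← mul_pow]; norm_num
    _ ≤ M * 4 ^ n * 2 ^ n := by gcongr; norm_num
    _ = M * 8 ^ n := by rw [mul_assoc, ← mul_pow]; norm_num

end Polynomial

section IteratedDerivWithin

open scoped Nat

variable {𝕜 E F : Type*} [NontriviallyNormedField 𝕜]
  [NormedAddCommGroup E] [NormedSpace 𝕜 E] [NormedAddCommGroup F] [NormedSpace 𝕜 F]
  {s t : Set 𝕜} {f : 𝕜 → E} {x : 𝕜}

theorem iteratedDerivWithin_iteratedDerivWithin (m n : ℕ) (f : 𝕜 → E) (s : Set 𝕜) :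
    iteratedDerivWithin n (iteratedDerivWithin m f s) s = iteratedDerivWithin (m + n) f s := by
  have h_iterate (k : ℕ) (g : 𝕜 → E) :
      iteratedDerivWithin k g s = (fun u ↦ derivWithin u s)^[k] g :=
    funext fun _ ↦ iteratedDerivWithin_eq_iterate
  rw [h_iterate, h_iterate, h_iterate, add_comm, Function.iterate_add_apply]

theorem contDiffOn_iteratedDerivWithin {m n : WithTop ℕ∞} {k : ℕ} (hf : ContDiffOn 𝕜 n f s)
    (hs : UniqueDiffOn 𝕜 s) (hmn : m + k ≤ n) :
    ContDiffOn 𝕜 m (iteratedDerivWithin k f s) s := by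
  rw [iteratedDerivWithin_eq_equiv_comp]
  exact (LinearIsometryEquiv.contDiff _).comp_contDiffOn fun x hx ↦
    (hf x hx).iteratedFDerivWithin_right hs hmn hx

theorem iteratedDerivWithin_subset {n : ℕ} (hst : s ⊆ t) (hs : UniqueDiffOn 𝕜 s)
    (ht : UniqueDiffOn 𝕜 t) (hf : ContDiffOn 𝕜 n f t) (hx : x ∈ s) :
    iteratedDerivWithin n f s x = iteratedDerivWithin n f t x := by
  rw [iteratedDerivWithin, iteratedDerivWithin, iteratedFDerivWithin_subset hst hs ht hf hx]

theorem iteratedDerivWithin_continuousLinearMap_comp {n : ℕ} (L : E →L[𝕜] F)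
    (hf : ContDiffWithinAt 𝕜 n f s x) (hs : UniqueDiffOn 𝕜 s) (hx : x ∈ s) :
    iteratedDerivWithin n (L ∘ f) s x = L (iteratedDerivWithin n f s x) := by
  rw [iteratedDerivWithin, L.iteratedFDerivWithin_comp_left hf hs hx le_rfl]
  rfl

end IteratedDerivWithin

section Interpolation

open scoped Nat

theorem abs_sub_taylorWithinEval_le {n : ℕ} {s : Set ℝ} {f : ℝ → ℝ} {x y B : ℝ}
    (hs : UniqueDiffOn ℝ s) (hf : ContDiffOn ℝ (n + 1) f s) (hxy : uIcc x y ⊆ s)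
    (hB : ∀ z ∈ uIcc x y, |iteratedDerivWithin (n + 1) f s z| ≤ B) :
    |f y - taylorWithinEval f n s x y| ≤ B * |y - x| ^ (n + 1) / (n + 1)! := by
  rcases eq_or_ne x y with rfl | hne
  · simp
  have hu : UniqueDiffOn ℝ (uIcc x y) := uniqueDiffOn_uIcc hne
  have h_subset {m : ℕ} (hm : m ≤ n + 1) {z : ℝ} (hz : z ∈ uIcc x y) :
      iteratedDerivWithin m f (uIcc x y) z = iteratedDerivWithin m f s z :=
    iteratedDerivWithin_subset hxy hu hs (hf.of_le (by exact_mod_cast hm)) hz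
  have h_diff : DifferentiableOn ℝ (iteratedDerivWithin n f (uIcc x y)) (uIoo x y) :=
    ((hf.mono hxy).differentiableOn_iteratedDerivWithin
      (by exact_mod_cast n.lt_succ_self) hu).mono uIoo_subset_uIcc_self
  have h_taylor : taylorWithinEval f n (uIcc x y) x y = taylorWithinEval f n s x y := by
    simp only [taylor_within_apply]
    refine Finset.sum_congr rfl fun m hm ↦ ?_
    rw [h_subset (Finset.mem_range.1 hm).le left_mem_uIcc]
  obtain ⟨z, hz, h_lagrange⟩ := taylor_mean_remainder_lagrange hne
    ((hf.mono hxy).of_le (by exact_mod_cast n.le_succ)) h_diff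
  have hz' : z ∈ uIcc x y := uIoo_subset_uIcc_self hz
  rw [← h_taylor, h_lagrange, h_subset le_rfl hz', abs_div, abs_mul, abs_pow, Nat.abs_cast]
  gcongr
  exact hB z hz'

theorem abs_iteratedDerivWithin_mul_pow_le {k m : ℕ} {s : Set ℝ} {f : ℝ → ℝ} {x h A B : ℝ}
    (hkm : k < m) (hs : UniqueDiffOn ℝ s) (hf : ContDiffOn ℝ m f s) (hseg : uIcc x (x + h) ⊆ s)
    (hA : ∀ z ∈ uIcc x (x + h), |f z| ≤ A)
    (hB : ∀ z ∈ uIcc x (x + h), |iteratedDerivWithin m f s z| ≤ B) :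
    |iteratedDerivWithin k f s x| * |h| ^ k ≤ k ! * 8 ^ m * (A + B * |h| ^ m / m !) := by
  obtain ⟨n, rfl⟩ : ∃ n, m = n + 1 := ⟨m - 1, by omega⟩
  have hB_nonneg : 0 ≤ B := (abs_nonneg _).trans (hB x left_mem_uIcc)
  set c : ℕ → ℝ := fun j ↦ iteratedDerivWithin j f s x * h ^ j / j ! with hc
  have h_taylor (u : ℝ) :
      ∑ j ∈ Finset.range (n + 1), c j * u ^ j = taylorWithinEval f n s x (x + u * h) := by
    rw [taylor_within_apply]
    refine Finset.sum_congr rfl fun j _ ↦ ?_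
    rw [smul_eq_mul, hc, add_sub_cancel_left, mul_pow]
    ring
  have h_sum : ∀ u ∈ Icc (0 : ℝ) 1, |∑ j ∈ Finset.range (n + 1), c j * u ^ j| ≤
      A + B * |h| ^ (n + 1) / (n + 1)! := by
    intro u hu
    have h_mem : x + u * h ∈ uIcc x (x + h) := by
      rw [← segment_eq_uIcc, segment_eq_image']
      exact ⟨u, hu, by simp⟩
    have h_sub : uIcc x (x + u * h) ⊆ uIcc x (x + h) := uIcc_subset_uIcc_left h_mem
    have h_remainder := abs_sub_taylorWithinEval_le hs (by exact_mod_cast hf)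
      (h_sub.trans hseg) fun z hz ↦ hB z (h_sub hz)
    have h_step : |x + u * h - x| ≤ |h| := by
      rw [add_sub_cancel_left, abs_mul, abs_of_nonneg hu.1]
      exact mul_le_of_le_one_left (abs_nonneg h) hu.2
    calc |∑ j ∈ Finset.range (n + 1), c j * u ^ j|
        ≤ |f (x + u * h)| + |f (x + u * h) - taylorWithinEval f n s x (x + u * h)| := by
          rw [h_taylor]
          linarith [abs_sub_abs_le_abs_sub (taylorWithinEval f n s x (x + u * h)) (f (x + u * h)),
            abs_sub_comm (taylorWithinEval f n s x (x + u * h)) (f (x + u * h))]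
      _ ≤ A + B * |h| ^ (n + 1) / (n + 1)! := by
          refine add_le_add (hA _ h_mem) (h_remainder.trans ?_)
          gcongr
  have h_coeff := abs_coeff_le_of_forall_abs_sum_le (Nat.lt_succ_iff.1 hkm) h_sum
  have hM_nonneg := (abs_nonneg _).trans (h_sum 0 (by simp))
  calc |iteratedDerivWithin k f s x| * |h| ^ k = k ! * |c k| := by
        rw [hc, abs_div, abs_mul, abs_pow, Nat.abs_cast]
        field_simp
    _ ≤ k ! * ((A + B * |h| ^ (n + 1) / (n + 1)!) * 8 ^ (n + 1)) := by
        gcongr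
        exact h_coeff.trans (by gcongr <;> norm_num)
    _ = k ! * 8 ^ (n + 1) * (A + B * |h| ^ (n + 1) / (n + 1)!) := by ring

theorem norm_iteratedDerivWithin_mul_pow_le {E : Type*} [NormedAddCommGroup E] [NormedSpace ℝ E]
    {k m : ℕ} {s : Set ℝ} {f : ℝ → E} {x h A B : ℝ}
    (hkm : k < m) (hs : UniqueDiffOn ℝ s) (hf : ContDiffOn ℝ m f s) (hseg : uIcc x (x + h) ⊆ s)
    (hA : ∀ z ∈ uIcc x (x + h), ‖f z‖ ≤ A)
    (hB : ∀ z ∈ uIcc x (x + h), ‖iteratedDerivWithin m f s z‖ ≤ B) :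
    ‖iteratedDerivWithin k f s x‖ * |h| ^ k ≤ k ! * 8 ^ m * (A + B * |h| ^ m / m !) := by
  obtain ⟨L, hL_norm, hL⟩ := exists_dual_vector'' ℝ (iteratedDerivWithin k f s x)
  have h_comp {j : ℕ} (hj : j ≤ m) {z : ℝ} (hz : z ∈ s) :
      iteratedDerivWithin j (L ∘ f) s z = L (iteratedDerivWithin j f s z) :=
    iteratedDerivWithin_continuousLinearMap_comp L
      ((hf z hz).of_le (by exact_mod_cast hj)) hs hz
  have h_scalar := abs_iteratedDerivWithin_mul_pow_le hkm hs (L.contDiff.comp_contDiffOn hf) hseg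
    (fun z hz ↦ (L.le_of_opNorm_le_of_le hL_norm (hA z hz)).trans_eq (one_mul A))
    (fun z hz ↦ by
      rw [h_comp le_rfl (hseg hz)]
      exact (L.le_of_opNorm_le_of_le hL_norm (hB z hz)).trans_eq (one_mul B))
  rwa [h_comp hkm.le (hseg left_mem_uIcc), hL, RCLike.ofReal_real_eq_id, id, abs_norm] at h_scalar

end Interpolation

section Gevrey

open scoped Nat

theorem factorial_mul_rpow_le_rpow_pow_mul_rpow {s : ℝ} {p k N : ℕ} (hs : 0 ≤ s) (hN : 0 < N)
    (hpk : p + k = N) :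
    k ! * (p : ℝ) ^ (s * p) ≤ ((N : ℝ) ^ (1 - s)) ^ k * (N : ℝ) ^ (N * s) := by
  have hN' : (0 : ℝ) < N := by exact_mod_cast hN
  have h_factorial : (k ! : ℝ) ≤ (N : ℝ) ^ k := by
    exact_mod_cast k.factorial_le_pow.trans (Nat.pow_le_pow_left (by omega) k)
  calc k ! * (p : ℝ) ^ (s * p) ≤ (N : ℝ) ^ k * (N : ℝ) ^ (s * p) := by gcongr; omega
    _ = ((N : ℝ) ^ (1 - s)) ^ k * (N : ℝ) ^ (N * s) := by
      rw [← Real.rpow_mul_natCast hN'.le, ← Real.rpow_natCast, ← Real.rpow_add hN',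
        ← Real.rpow_add hN', ← hpk]
      push_cast
      ring_nf

theorem rpow_mul_rpow_pow_le_factorial_mul {c s : ℝ} {j N q : ℕ} (hs : 0 ≤ s) (hc : 0 ≤ c)
    (hN : 0 < N) (hjq : N + j = q) (hq : (q : ℝ) ≤ c * N) :
    (q : ℝ) ^ (s * q) * ((N : ℝ) ^ (1 - s)) ^ j ≤
      j ! * ((c ^ s) ^ q * Real.exp N * (N : ℝ) ^ (N * s)) := by
  have hN' : (0 : ℝ) < N := by exact_mod_cast hN
  have h_exp : (N : ℝ) ^ j ≤ j ! * Real.exp N := by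
    rw [← div_le_iff₀' (by positivity)]
    exact Real.pow_div_factorial_le_exp _ hN'.le j
  calc (q : ℝ) ^ (s * q) * ((N : ℝ) ^ (1 - s)) ^ j
      ≤ (c * N) ^ (s * q) * ((N : ℝ) ^ (1 - s)) ^ j := by gcongr
    _ = (c ^ s) ^ q * ((N : ℝ) ^ (s * q) * ((N : ℝ) ^ (1 - s)) ^ j) := by
      rw [Real.mul_rpow hc hN'.le, ← Real.rpow_mul_natCast hc, mul_assoc]
    _ = (c ^ s) ^ q * ((N : ℝ) ^ j * (N : ℝ) ^ (N * s)) := by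
      congr 1
      rw [← Real.rpow_mul_natCast hN'.le, ← Real.rpow_natCast, ← Real.rpow_add hN',
        ← Real.rpow_add hN', ← hjq]
      push_cast
      ring_nf
    _ ≤ (c ^ s) ^ q * (j ! * Real.exp N * (N : ℝ) ^ (N * s)) := by gcongr
    _ = j ! * ((c ^ s) ^ q * Real.exp N * (N : ℝ) ^ (N * s)) := by ring

theorem factorial_mul_rpow_add_rpow_mul_pow_div_factorial_le {c s l : ℝ} {p k j N q : ℕ}
    (hs : 0 ≤ s) (hc : 0 ≤ c) (hl : 0 < l) (hN : 0 < N) (hpk : p + k = N) (hjq : N + j = q)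
    (hq : (q : ℝ) ≤ c * N) :
    k ! * ((p : ℝ) ^ (s * p) + (q : ℝ) ^ (s * q) * (l * (N : ℝ) ^ (1 - s)) ^ (k + j) / (k + j)!) ≤
      (l * (N : ℝ) ^ (1 - s)) ^ k *
        ((l⁻¹ ^ k + l ^ j * (c ^ s) ^ q * Real.exp N) * (N : ℝ) ^ (N * s)) := by
  have h_factorial : (k ! : ℝ) / (k + j)! ≤ 1 / j ! := by
    rw [div_le_div_iff₀ (by positivity) (by positivity), one_mul]
    exact_mod_cast Nat.le_of_dvd (Nat.factorial_pos _)
      (Nat.factorial_mul_factorial_dvd_factorial_add k j)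
  have h_lower := factorial_mul_rpow_le_rpow_pow_mul_rpow hs hN hpk
  have h_upper := rpow_mul_rpow_pow_le_factorial_mul hs hc hN hjq hq
  rw [← div_le_iff₀' (by positivity)] at h_upper
  set r := (N : ℝ) ^ (1 - s)
  calc k ! * ((p : ℝ) ^ (s * p) + (q : ℝ) ^ (s * q) * (l * r) ^ (k + j) / (k + j)!)
      = k ! * (p : ℝ) ^ (s * p) +
          (l * r) ^ k * (l ^ j * ((q : ℝ) ^ (s * q) * r ^ j) * (k ! / (k + j)!)) := by ring
    _ ≤ r ^ k * (N : ℝ) ^ (N * s) +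
          (l * r) ^ k * (l ^ j * ((q : ℝ) ^ (s * q) * r ^ j) * (1 / j !)) := by gcongr
    _ = r ^ k * (N : ℝ) ^ (N * s) +
          (l * r) ^ k * (l ^ j * ((q : ℝ) ^ (s * q) * r ^ j / j !)) := by ring
    _ ≤ r ^ k * (N : ℝ) ^ (N * s) +
          (l * r) ^ k * (l ^ j * ((c ^ s) ^ q * Real.exp N * (N : ℝ) ^ (N * s))) := by gcongr
    _ = (l * r) ^ k * ((l⁻¹ ^ k + l ^ j * (c ^ s) ^ q * Real.exp N) * (N : ℝ) ^ (N * s)) := by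
      have h_cancel : l ^ k * l⁻¹ ^ k = 1 := by rw [← mul_pow, mul_inv_cancel₀ hl.ne', one_pow]
      linear_combination -(r ^ k * (N : ℝ) ^ (N * s)) * h_cancel

theorem one_le_max_inv_self {l : ℝ} (hl : 0 < l) : 1 ≤ max l l⁻¹ := by
  rcases le_total 1 l with h_one_le | h_le_one
  · exact le_max_of_le_left h_one_le
  · exact le_max_of_le_right ((one_le_inv₀ hl).2 h_le_one)

theorem pos_and_one_le_of_lt_of_le_mul {N q : ℕ} {c : ℝ} (hNq : N < q) (hqc : (q : ℝ) ≤ c * N) :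
    0 < N ∧ 1 ≤ c := by
  have h_lt : (N : ℝ) < c * N := lt_of_lt_of_le (by exact_mod_cast hNq) hqc
  have hN : 0 < N := Nat.pos_of_ne_zero fun h_zero ↦ by simp [h_zero] at h_lt
  exact ⟨hN, (one_lt_of_lt_mul_right₀ N.cast_nonneg h_lt).le⟩

theorem pow_mul_inv_pow_add_le_two_mul_pow {l ν : ℝ} {j k m N q : ℕ} (hl : 0 < l) (hν : 1 ≤ ν)
    (hj : j ≤ q) (hk : k ≤ q) (hm : m ≤ q) (hN : N ≤ q) :
    8 ^ m * (l⁻¹ ^ k + l ^ j * ν ^ q * Real.exp N) ≤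
      2 * (8 * max l l⁻¹ * ν * Real.exp 1) ^ q := by
  set L := max l l⁻¹
  have hL : 1 ≤ L := one_le_max_inv_self hl
  have h_pow {y : ℝ} (hy : 0 < y) (hyL : y ≤ L) {i : ℕ} (hi : i ≤ q) : y ^ i ≤ L ^ q :=
    (pow_le_pow_left₀ hy.le hyL i).trans (pow_le_pow_right₀ hL hi)
  have h_exp : Real.exp N ≤ Real.exp 1 ^ q := by
    rw [← Real.exp_one_pow]
    exact pow_le_pow_right₀ (Real.one_le_exp zero_le_one) hN
  have h_one_le : 1 ≤ ν ^ q * Real.exp 1 ^ q :=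
    one_le_mul_of_one_le_of_one_le (one_le_pow₀ hν) (one_le_pow₀ (Real.one_le_exp zero_le_one))
  calc 8 ^ m * (l⁻¹ ^ k + l ^ j * ν ^ q * Real.exp N)
      ≤ 8 ^ q * (L ^ q * (ν ^ q * Real.exp 1 ^ q) + L ^ q * ν ^ q * Real.exp 1 ^ q) := by
        gcongr
        · norm_num
        · exact (h_pow (inv_pos.2 hl) (le_max_right _ _) hk).trans
            (le_mul_of_one_le_right (by positivity) h_one_le)
        · exact h_pow hl (le_max_left _ _) hj
    _ = 2 * (8 * L * ν * Real.exp 1) ^ q := by ring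

variable {E : Type*} [NormedAddCommGroup E] [NormedSpace ℝ E]

theorem norm_iteratedDerivWithin_le_of_abs_eq_mul_rpow {S : Set ℝ} {f : ℝ → E} {c s l x h : ℝ}
    {p N q : ℕ} (hs : 0 ≤ s) (hl : 0 < l) (hpN : p ≤ N) (hNq : N < q) (hqc : (q : ℝ) ≤ c * N)
    (hS : UniqueDiffOn ℝ S) (hf : ContDiffOn ℝ q f S) (hh : |h| = l * (N : ℝ) ^ (1 - s))
    (hseg : uIcc x (x + h) ⊆ S)
    (hp : ∀ y ∈ S, ‖iteratedDerivWithin p f S y‖ ≤ (p : ℝ) ^ (s * p))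
    (hq : ∀ y ∈ S, ‖iteratedDerivWithin q f S y‖ ≤ (q : ℝ) ^ (s * q)) :
    ‖iteratedDerivWithin N f S x‖ ≤
      2 * (8 * max l l⁻¹ * c ^ s * Real.exp 1) ^ q * (N : ℝ) ^ (N * s) := by
  obtain ⟨k, rfl⟩ := Nat.exists_eq_add_of_le hpN
  obtain ⟨j, rfl⟩ := Nat.exists_eq_add_of_le hNq.le
  set N := p + k
  obtain ⟨hN, hc⟩ := pos_and_one_le_of_lt_of_le_mul hNq hqc
  have h_interp := norm_iteratedDerivWithin_mul_pow_le (k := k) (m := k + j)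
    (f := iteratedDerivWithin p f S) (by omega) hS
    (contDiffOn_iteratedDerivWithin hf hS (by exact_mod_cast (by omega : k + j + p ≤ N + j))) hseg
    (fun z hz ↦ hp z (hseg hz)) (fun z hz ↦ by
      rw [iteratedDerivWithin_iteratedDerivWithin, ← add_assoc]
      exact hq z (hseg hz))
  rw [iteratedDerivWithin_iteratedDerivWithin, hh] at h_interp
  have h_balance := factorial_mul_rpow_add_rpow_mul_pow_div_factorial_le hs
    (zero_le_one.trans hc) hl hN (rfl : p + k = N) (rfl : N + j = N + j) hqc
  have h_absorb := pow_mul_inv_pow_add_le_two_mul_pow (j := j) (k := k) (m := k + j) (N := N)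
    (q := N + j) hl (Real.one_le_rpow hc hs) (by omega) (by omega) (by omega) (by omega)
  set η := l * (N : ℝ) ^ (1 - s)
  refine le_of_mul_le_mul_right ?_ (by positivity : 0 < η ^ k)
  calc ‖iteratedDerivWithin N f S x‖ * η ^ k
      ≤ 8 ^ (k + j) * (k ! * ((p : ℝ) ^ (s * p) +
          ((N + j : ℕ) : ℝ) ^ (s * (N + j : ℕ)) * η ^ (k + j) / (k + j)!)) := by
        linarith
    _ ≤ 8 ^ (k + j) * (η ^ k *
          ((l⁻¹ ^ k + l ^ j * (c ^ s) ^ (N + j) * Real.exp N) * (N : ℝ) ^ (N * s))) := by gcongr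
    _ = 8 ^ (k + j) * (l⁻¹ ^ k + l ^ j * (c ^ s) ^ (N + j) * Real.exp N) *
          (N : ℝ) ^ (N * s) * η ^ k := by ring
    _ ≤ 2 * (8 * max l l⁻¹ * c ^ s * Real.exp 1) ^ (N + j) * (N : ℝ) ^ (N * s) * η ^ k := by
        gcongr

theorem exists_abs_eq_uIcc_add_subset_Icc {a b x η : ℝ} (hx : x ∈ Icc a b) (hη : 0 ≤ η)
    (hη' : η ≤ (b - a) / 2) : ∃ h, |h| = η ∧ uIcc x (x + h) ⊆ Icc a b := by
  rcases le_total x ((a + b) / 2) with h_left | h_right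
  · exact ⟨η, abs_of_nonneg hη, uIcc_subset_Icc hx ⟨by linarith [hx.1], by linarith⟩⟩
  · refine ⟨-η, by rw [abs_neg, abs_of_nonneg hη], uIcc_subset_Icc hx ⟨?_, ?_⟩⟩ <;>
      linarith [hx.2]

theorem norm_iteratedDerivWithin_Icc_le_of_lt_of_le_mul {a b s c : ℝ} {f : ℝ → E} {p N q : ℕ}
    (hab : a < b) (hs : 1 ≤ s) (hpN : p ≤ N) (hNq : N < q) (hqc : (q : ℝ) ≤ c * N)
    (hf : ContDiffOn ℝ q f (Icc a b))
    (hp : ∀ y ∈ Icc a b, ‖iteratedDerivWithin p f (Icc a b) y‖ ≤ (p : ℝ) ^ (s * p))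
    (hq : ∀ y ∈ Icc a b, ‖iteratedDerivWithin q f (Icc a b) y‖ ≤ (q : ℝ) ^ (s * q))
    {x : ℝ} (hx : x ∈ Icc a b) :
    ‖iteratedDerivWithin N f (Icc a b) x‖ ≤
      (2 * (8 * max ((b - a) / 2) ((b - a) / 2)⁻¹ * c ^ s * Real.exp 1) ^ c) ^ (N + 1) *
        (N : ℝ) ^ (N * s) := by
  obtain ⟨hN, hc⟩ := pos_and_one_le_of_lt_of_le_mul hNq hqc
  have hl : 0 < (b - a) / 2 := by linarith
  have h_step : (b - a) / 2 * (N : ℝ) ^ (1 - s) ≤ (b - a) / 2 :=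
    mul_le_of_le_one_right hl.le <| Real.rpow_le_one_of_one_le_of_nonpos
      (by exact_mod_cast Nat.one_le_of_lt hN) (by linarith)
  obtain ⟨h, hh, hseg⟩ := exists_abs_eq_uIcc_add_subset_Icc hx (by positivity) h_step
  refine (norm_iteratedDerivWithin_le_of_abs_eq_mul_rpow (by linarith) hl hpN hNq hqc
    (uniqueDiffOn_Icc hab) hf hh hseg hp hq).trans ?_
  set R := 8 * max ((b - a) / 2) ((b - a) / 2)⁻¹ * c ^ s * Real.exp 1
  have hR : 1 ≤ R := by
    have h_max := one_le_max_inv_self hl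
    have h_rpow := Real.one_le_rpow hc (zero_le_one.trans hs)
    exact one_le_mul_of_one_le_of_one_le (one_le_mul_of_one_le_of_one_le (by linarith) h_rpow)
      (Real.one_le_exp zero_le_one)
  have hRc : 1 ≤ R ^ c := Real.one_le_rpow hR (zero_le_one.trans hc)
  have h_pow : R ^ q ≤ (R ^ c) ^ N := by
    rw [← Real.rpow_natCast, ← Real.rpow_mul_natCast (zero_le_one.trans hR)]
    exact Real.rpow_le_rpow_of_exponent_le hR hqc
  gcongr
  calc 2 * R ^ q ≤ 2 * R ^ c * (2 * R ^ c) ^ N := by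
        gcongr
        · linarith
        · exact h_pow.trans (by gcongr; linarith)
    _ = (2 * R ^ c) ^ (N + 1) := (pow_succ' _ _).symm

theorem exists_gevrey_bound_of_eventually {S : Set ℝ} {f : ℝ → E} {s C : ℝ}
    (hS : IsCompact S) (hSu : UniqueDiffOn ℝ S) (hf : ContDiffOn ℝ (⊤ : ℕ∞) f S) (hs : 0 ≤ s)
    (hC : 0 ≤ C) (h_eventually : ∀ᶠ n : ℕ in atTop, ∀ x ∈ S,
      ‖iteratedDerivWithin n f S x‖ ≤ C ^ (n + 1) * (n : ℝ) ^ (n * s)) :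
    ∃ K > 0, ∀ n : ℕ, 1 ≤ n → ∀ x ∈ S,
      ‖iteratedDerivWithin n f S x‖ ≤ K ^ (n + 1) * (n : ℝ) ^ (n * s) := by
  obtain ⟨n₀, hn₀⟩ := eventually_atTop.1 h_eventually
  have h_bounded (n : ℕ) : ∃ M, ∀ x ∈ S, ‖iteratedDerivWithin n f S x‖ ≤ M :=
    hS.exists_bound_of_continuousOn
      (hf.continuousOn_iteratedDerivWithin (by exact_mod_cast le_top) hSu)
  choose M hM using h_bounded
  set K := 1 + C + ∑ n ∈ Finset.range n₀, |M n|
  have h_sum_nonneg : 0 ≤ ∑ n ∈ Finset.range n₀, |M n| := Finset.sum_nonneg fun n _ ↦ abs_nonneg _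
  have hK : 1 ≤ K := by linarith
  refine ⟨K, by linarith, fun n hn x hx ↦ ?_⟩
  rcases le_or_gt n₀ n with h_ge | h_lt
  · refine (hn₀ n h_ge x hx).trans ?_
    gcongr
    linarith
  · have h_single : |M n| ≤ ∑ n ∈ Finset.range n₀, |M n| :=
      Finset.single_le_sum (f := fun n ↦ |M n|) (fun n _ ↦ abs_nonneg _) (Finset.mem_range.2 h_lt)
    calc ‖iteratedDerivWithin n f S x‖ ≤ K := by linarith [hM n x hx, le_abs_self (M n)]
      _ ≤ K ^ (n + 1) := le_self_pow₀ hK (by omega)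
      _ ≤ K ^ (n + 1) * (n : ℝ) ^ (n * s) :=
        le_mul_of_one_le_right (by positivity)
          (Real.one_le_rpow (by exact_mod_cast hn) (by positivity))

theorem exists_le_lt_succ {α : Type*} [LinearOrder α] [NoMaxOrder α] {d : ℕ → α} {N : α}
    (hd : Tendsto d atTop atTop) (hN : d 0 ≤ N) : ∃ i, d i ≤ N ∧ N < d (i + 1) := by
  by_contra! h_step
  have h_le (i : ℕ) : d i ≤ N := Nat.rec hN h_step i
  obtain ⟨i, hi⟩ := (hd.eventually_gt_atTop N).exists
  exact (h_le i).not_gt hi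

theorem gevrey_regularity_of_interpolation_general {a b s c₀ : ℝ} {f : ℝ → E} {d : ℕ → ℕ}
    (hab : a < b) (hs : 1 ≤ s) (hf : ContDiffOn ℝ (⊤ : ℕ∞) f (Icc a b))
    (hdpos : ∀ n, 0 < d n) (hdtop : Tendsto d atTop atTop)
    (hgap : ∀ n, (d (n + 1) : ℝ) / (d n : ℝ) ≤ c₀)
    (hbound : ∀ n, ∀ x ∈ Icc a b,
      ‖iteratedDerivWithin (d n) f (Icc a b) x‖ ≤ (d n : ℝ) ^ (s * (d n : ℝ))) :
    ∃ K > 0, ∀ n : ℕ, 1 ≤ n → ∀ x ∈ Icc a b,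
      ‖iteratedDerivWithin n f (Icc a b) x‖ ≤ K ^ (n + 1) * (n : ℝ) ^ ((n : ℝ) * s) := by
  have hc₀ : 0 ≤ c₀ := le_trans (by positivity) (hgap 0)
  have : 0 < (b - a) / 2 := by linarith
  refine exists_gevrey_bound_of_eventually
    (C := 2 * (8 * max ((b - a) / 2) ((b - a) / 2)⁻¹ * c₀ ^ s * Real.exp 1) ^ c₀)
    isCompact_Icc (uniqueDiffOn_Icc hab) hf (by linarith) (by positivity) ?_
  filter_upwards [eventually_ge_atTop (d 0)] with N hN x hx
  obtain ⟨i, hi, hi'⟩ := exists_le_lt_succ hdtop hN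
  have hqc : (d (i + 1) : ℝ) ≤ c₀ * N :=
    ((div_le_iff₀ (by exact_mod_cast hdpos i)).1 (hgap i)).trans (by gcongr)
  exact norm_iteratedDerivWithin_Icc_le_of_lt_of_le_mul hab hs hi hi' hqc
    (hf.of_le (by exact_mod_cast le_top)) (hbound i) (hbound (i + 1)) hx

end Gevrey

/-- The Gevrey specialization of the main theorem: if a smooth `f` on `[a,b]`
satisfies `max |f^(d n)| ≤ (d n)^(s * d n)` along an increasing divergent
sequence `d` of positive integers with `d (n+1) / d n ≤ c₀`, then `f` belongs
to the Gevrey class `G^s([a,b])`. -/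
theorem gevrey_regularity_of_interpolation
    (a b : ℝ) (hab : a < b)
    (s : ℝ) (hs : 1 ≤ s)
    (f : ℝ → ℝ) (hf : ContDiffOn ℝ (⊤ : ℕ∞) f (Icc a b))
    (c₀ : ℝ) (hc₀ : 0 < c₀)
    (d : ℕ → ℕ) (hdpos : ∀ n, 0 < d n) (hdmono : StrictMono d)
    (hdtop : Tendsto d atTop atTop)
    (hgap : ∀ n, (d (n + 1) : ℝ) / (d n : ℝ) ≤ c₀)
    (hbound : ∀ n, ∀ x ∈ Icc a b,
      |iteratedDerivWithin (d n) f (Icc a b) x| ≤ (d n : ℝ) ^ (s * (d n : ℝ))) :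
    ∃ K > 0, ∀ n : ℕ, 1 ≤ n → ∀ x ∈ Icc a b,
      |iteratedDerivWithin n f (Icc a b) x| ≤ K ^ (n + 1) * (n : ℝ) ^ ((n : ℝ) * s) :=
  gevrey_regularity_of_interpolation_general hab hs hf hdpos hdtop hgap hbound
end
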